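/- Fix n ≥ 1 and let B_n be the word (1,1,2,2,3,3,…,n,n) of length 2n. A biderangement is a rearrangement w of the entries of B_n (a word w(1)⋯w(2n) whose multiset of letters is {1,1,2,2,…,n,n}) such that w(j) ≠ B_n(j) for all j ∈ [2n]. Then ∑_{w ∈ BD_n} (-1)^{inv(w)} ∏_{j ∈ EXCv(w)} x_j ∏_{j ∈ RLMv(w)} y_j = ∑_{π ∈ D_n} ∏_{j ∈ EXCv²(π)} x_j ∏_{j ∈ RLMv(π)} y_j, where BD_n is the set of biderangements of B_n, D_n is the set of derangements of [n], EXCv²(π) is the multiset obtained from EXCv(π) by repeating each element twice, and the products over multisets are taken with multiplicity. -/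

import Mathlib

open Finset MvPolynomial

/-- Number of inversions of a permutation of `Fin n`
(pairs `p.1 < p.2` with `π p.1 > π p.2`). -/
def inversions {n : ℕ} (π : Equiv.Perm (Fin n)) : ℕ :=
  (Finset.univ.filter fun p : Fin n × Fin n => p.1 < p.2 ∧ π p.2 < π p.1).card

/-- Excedance indices of a permutation. -/
def EXCi {n : ℕ} (π : Equiv.Perm (Fin n)) : Finset (Fin n) :=
  Finset.univ.filter fun i => i < π i

/-- Excedance values of a permutation. -/
def EXCv {n : ℕ} (π : Equiv.Perm (Fin n)) : Finset (Fin n) :=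
  (EXCi π).image π

/-- Right-to-left minima indices of a permutation. -/
def RLMi {n : ℕ} (π : Equiv.Perm (Fin n)) : Finset (Fin n) :=
  Finset.univ.filter fun i => ∀ j, i < j → π i < π j

/-- Right-to-left minima values of a permutation. -/
def RLMv {n : ℕ} (π : Equiv.Perm (Fin n)) : Finset (Fin n) :=
  (RLMi π).image π

/-- The derangements of `Fin n`, i.e. permutations with no fixed point. -/
def derangementsF (n : ℕ) : Finset (Equiv.Perm (Fin n)) :=
  Finset.univ.filter fun π => ∀ i, π i ≠ i

/-- The word `B_n = (1,1,2,2,…,n,n)`: here positions are `Fin (2*n)` and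
letters are `Fin n` (representing `[n]` via `v ↦ v + 1`), so the letter at
(0-based) position `j` is `⌊j/2⌋`. -/
def Bword (n : ℕ) : Fin (2 * n) → Fin n :=
  fun j => ⟨(j : ℕ) / 2, by have := j.isLt; omega⟩

/-- Number of inversions of a word. -/
def invW {n : ℕ} (w : Fin (2 * n) → Fin n) : ℕ :=
  (Finset.univ.filter fun p : Fin (2 * n) × Fin (2 * n) =>
    p.1 < p.2 ∧ w p.2 < w p.1).card

/-- Right-to-left minima values of a word. -/
def RLMvW {n : ℕ} (w : Fin (2 * n) → Fin n) : Finset (Fin n) :=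
  (Finset.univ.filter fun i => ∀ j, i < j → w i < w j).image w

/-- The biderangements of `B_n`: rearrangements `w` of the entries of `B_n`
(every letter occurs exactly twice) with `w j ≠ B_n j` for all `j`. -/
def biderangements (n : ℕ) : Finset (Fin (2 * n) → Fin n) :=
  Finset.univ.filter fun w =>
    (∀ v : Fin n, (Finset.univ.filter fun j => w j = v).card = 2) ∧
    (∀ j, w j ≠ Bword n j)

/-!
Weight a word by `∏ j, g (B_n(j)) (w(j))` for a matrix `g`; a zero diagonal then imposes the
derangement condition, so the sums may run over all rearrangements of `B_n` and all permutations.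
The two positions carrying the letter `i` in `B_n` form the `i`-th block. Take the first block of
`w` with distinct letters and swap them: the sign of `w` changes and the weight does not. The
right-to-left minima values do not change either: the earlier blocks use up both copies of their
letters, so each letter of the swapped block occurs again further right. Hence the words with such a
block cancel. The others are `π ∘ B_n` for permutations `π`, with `4 inv(π)` inversions.
-/

section Block

variable {n : ℕ}

/-- The first of the two positions at which `B_n` carries the letter `i`. -/
def blockFst (i : Fin n) : Fin (2 * n) := ⟨2 * i, by omega⟩

/-- The second of the two positions at which `B_n` carries the letter `i`. -/
def blockSnd (i : Fin n) : Fin (2 * n) := ⟨2 * i + 1, by omega⟩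

@[simp]
lemma Bword_blockFst (i : Fin n) : Bword n (blockFst i) = i := by
  ext; simp [Bword, blockFst]

@[simp]
lemma Bword_blockSnd (i : Fin n) : Bword n (blockSnd i) = i := by
  ext; simp only [Bword, blockSnd]; omega

lemma Bword_surjective : Function.Surjective (Bword n) :=
  fun i => ⟨blockFst i, Bword_blockFst i⟩

lemma Bword_monotone : Monotone (Bword n) :=
  fun _ _ h => Nat.div_le_div_right h

lemma blockFst_covBy_blockSnd (i : Fin n) : blockFst i ⋖ blockSnd i := by
  simp [Fin.covBy_iff, blockFst, blockSnd]

lemma eq_blockFst_or_eq_blockSnd (j : Fin (2 * n)) :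
    j = blockFst (Bword n j) ∨ j = blockSnd (Bword n j) := by
  simp only [Fin.ext_iff, Bword, blockFst, blockSnd]; omega

lemma filter_Bword_eq (i : Fin n) :
    ({j | Bword n j = i} : Finset (Fin (2 * n))) = {blockFst i, blockSnd i} := by
  ext j
  simp only [mem_filter_univ, mem_insert, mem_singleton]
  constructor
  · rintro rfl
    exact eq_blockFst_or_eq_blockSnd j
  · rintro (rfl | rfl) <;> simp

@[to_additive]
lemma prod_comp_Bword {M : Type*} [CommMonoid M] (f : Fin n → M) :
    ∏ j, f (Bword n j) = ∏ i, f i ^ 2 := by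
  simp_rw [← prod_fiberwise' univ (Bword n) f, prod_const, filter_Bword_eq,
    card_pair (blockFst_covBy_blockSnd _).ne]

end Block

section DoubledWord

variable {n : ℕ}

lemma invW_comp_Bword (π : Equiv.Perm (Fin n)) : invW (π ∘ Bword n) = 4 * inversions π := by
  have lt_iff (p q : Fin (2 * n)) : p < q ∧ π (Bword n q) < π (Bword n p) ↔
      Bword n p < Bword n q ∧ π (Bword n q) < π (Bword n p) :=
    and_congr_left fun h => ⟨fun hpq => (Bword_monotone hpq.le).lt_of_ne (ne_of_apply_ne π h.ne'),
      Bword_monotone.reflect_lt⟩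
  simp only [invW, inversions, card_filter, Fintype.sum_prod_type, Function.comp_apply, lt_iff]
  rw [sum_comp_Bword fun i => ∑ q, if i < Bword n q ∧ π (Bword n q) < π i then 1 else 0]
  simp_rw [fun i => sum_comp_Bword fun k => if i < k ∧ π k < π i then 1 else 0, ← smul_sum,
    smul_smul, smul_eq_mul, Nat.reduceMul]

lemma RLMvW_comp_Bword (π : Equiv.Perm (Fin n)) : RLMvW (π ∘ Bword n) = RLMv π := by
  ext v
  simp only [RLMvW, RLMv, RLMi, mem_image, mem_filter_univ, Function.comp_apply]
  constructor
  · rintro ⟨j, hj, rfl⟩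
    refine ⟨Bword n j, fun k hk => ?_, rfl⟩
    simpa using hj (blockFst k) (Bword_monotone.reflect_lt (by simpa using hk))
  · rintro ⟨i, hi, rfl⟩
    refine ⟨blockSnd i, fun k hk => ?_, by simp⟩
    have hik : i < Bword n k := by
      simp only [Bword, blockSnd, Fin.lt_def] at *
      omega
    simpa using hi _ hik

end DoubledWord

section AdjacentSwap

lemma swap_lt_swap_of_covBy {α : Type*} [LinearOrder α] {a b p q : α} (hab : a ⋖ b) (hpq : p < q)
    (hne : ¬(p = a ∧ q = b)) : Equiv.swap a b p < Equiv.swap a b q := by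
  have hp : p < b → p ≤ a := hab.le_of_lt
  have hq : a < q → b ≤ q := hab.ge_of_gt
  have := hab.lt
  simp only [Equiv.swap_apply_def]
  grind

lemma comp_swap_comp_swap {α β : Type*} [DecidableEq α] (f : α → β) (a b : α) :
    (f ∘ Equiv.swap a b) ∘ Equiv.swap a b = f := by
  funext c
  simp

variable {n : ℕ} {w : Fin (2 * n) → Fin n} {a b : Fin (2 * n)}

lemma invW_comp_swap_of_lt (hab : a ⋖ b) (h : w a < w b) :
    invW (w ∘ Equiv.swap a b) = invW w + 1 := by
  let inv (w : Fin (2 * n) → Fin n) : Finset (Fin (2 * n) × Fin (2 * n)) :=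
    {p | p.1 < p.2 ∧ w p.2 < w p.1}
  let e := (Equiv.swap a b).prodCongr (Equiv.swap a b)
  have mem_inv : (a, b) ∈ inv (w ∘ Equiv.swap a b) := by
    simpa [inv] using ⟨hab.lt, h⟩
  have card_erase : #(inv w) = #((inv (w ∘ Equiv.swap a b)).erase (a, b)) := by
    refine card_equiv e fun ⟨p, q⟩ => ?_
    simp only [inv, e, mem_filter_univ, mem_erase, Equiv.prodCongr_apply, Prod.map,
      Function.comp_apply, Equiv.swap_apply_self, ne_eq, Prod.mk.injEq]
    constructor
    · rintro ⟨hpq, hw⟩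
      refine ⟨fun ⟨hpa, hqb⟩ => ?_, swap_lt_swap_of_covBy hab hpq ?_, hw⟩
      · rw [Equiv.swap_apply_eq_iff, Equiv.swap_apply_left] at hpa
        rw [Equiv.swap_apply_eq_iff, Equiv.swap_apply_right] at hqb
        exact hab.lt.not_gt (hpa ▸ hqb ▸ hpq)
      · rintro ⟨rfl, rfl⟩
        exact h.not_gt hw
    · rintro ⟨hne, hpq, hw⟩
      refine ⟨?_, hw⟩
      simpa using swap_lt_swap_of_covBy hab hpq hne
  exact (card_erase_add_one mem_inv).symm.trans (congrArg (· + 1) card_erase.symm)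

lemma neg_one_pow_invW_comp_swap {R : Type*} [Ring R] (hab : a ⋖ b) (h : w a ≠ w b) :
    (-1 : R) ^ invW (w ∘ Equiv.swap a b) = -(-1) ^ invW w := by
  rcases h.lt_or_gt with h | h
  · rw [invW_comp_swap_of_lt hab h, pow_succ, mul_neg_one]
  · have hinv := invW_comp_swap_of_lt (w := w ∘ Equiv.swap a b) hab (by simpa using h)
    rw [comp_swap_comp_swap] at hinv
    rw [hinv, pow_succ, mul_neg_one, neg_neg]

lemma RLMvW_subset_RLMvW_comp_swap (hab : a ⋖ b) (ha : ∃ j, b < j ∧ w j = w a)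
    (hb : ∃ j, b < j ∧ w j = w b) : RLMvW w ⊆ RLMvW (w ∘ Equiv.swap a b) := by
  intro v
  simp only [RLMvW, mem_image, mem_filter_univ, Function.comp_apply]
  rintro ⟨p, hp, rfl⟩
  have hpa : p ≠ a := by
    rintro rfl
    obtain ⟨j, hj, hw⟩ := ha
    exact (hp j (hab.lt.trans hj)).ne' hw
  have hpb : p ≠ b := by
    rintro rfl
    obtain ⟨j, hj, hw⟩ := hb
    exact (hp j hj).ne' hw
  have swap_p : Equiv.swap a b p = p := Equiv.swap_apply_of_ne_of_ne hpa hpb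
  refine ⟨p, fun j hj => ?_, by rw [swap_p]⟩
  have p_lt := swap_lt_swap_of_covBy hab hj fun h => hpa h.1
  rw [swap_p] at p_lt ⊢
  exact hp _ p_lt

lemma RLMvW_comp_swap (hab : a ⋖ b) (ha : ∃ j, b < j ∧ w j = w a)
    (hb : ∃ j, b < j ∧ w j = w b) : RLMvW (w ∘ Equiv.swap a b) = RLMvW w := by
  have swap_gt {j} (hj : b < j) : Equiv.swap a b j = j :=
    Equiv.swap_apply_of_ne_of_ne (hab.lt.trans hj).ne' hj.ne'
  obtain ⟨j, hj, hja⟩ := ha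
  obtain ⟨k, hk, hkb⟩ := hb
  refine Subset.antisymm ?_ (RLMvW_subset_RLMvW_comp_swap hab ⟨j, hj, hja⟩ ⟨k, hk, hkb⟩)
  have := RLMvW_subset_RLMvW_comp_swap (w := w ∘ Equiv.swap a b) hab
    ⟨k, hk, by simpa [swap_gt hk] using hkb⟩ ⟨j, hj, by simpa [swap_gt hj] using hja⟩
  rwa [comp_swap_comp_swap] at this

end AdjacentSwap

section Rearrangement

variable {n : ℕ}

/-- The rearrangements of `B_n`, as words in which every letter occurs exactly twice. -/
def rearrangements (n : ℕ) : Finset (Fin (2 * n) → Fin n) :=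
  {w | ∀ v, #{j | w j = v} = 2}

lemma mem_rearrangements {w : Fin (2 * n) → Fin n} :
    w ∈ rearrangements n ↔ ∀ v, #{j | w j = v} = 2 :=
  mem_filter_univ w

lemma comp_perm_mem_rearrangements {w : Fin (2 * n) → Fin n} (hw : w ∈ rearrangements n)
    (σ : Equiv.Perm (Fin (2 * n))) : w ∘ σ ∈ rearrangements n := by
  rw [mem_rearrangements] at hw ⊢
  exact fun v => (card_equiv σ fun j => by simp).trans (hw v)

lemma comp_Bword_mem_rearrangements_iff {f : Fin n → Fin n} :
    f ∘ Bword n ∈ rearrangements n ↔ Function.Bijective f := by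
  have card_fiber (v : Fin n) : #{j | f (Bword n j) = v} = 2 * #{i | f i = v} := by
    rw [card_filter, sum_comp_Bword fun i => if f i = v then 1 else 0, ← smul_sum, ← card_filter,
      smul_eq_mul]
  simp only [mem_rearrangements, Function.comp_apply, card_fiber,
    Function.bijective_iff_existsUnique, Fintype.existsUnique_iff_card_one]
  exact forall_congr' fun v => by omega

/-- The blocks on which `w` is not constant: the letters `i` such that `w` differs at the two
positions at which `B_n` carries `i`. -/
def mixedBlocks (w : Fin (2 * n) → Fin n) : Finset (Fin n) :=
  {i | w (blockFst i) ≠ w (blockSnd i)}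

lemma mem_mixedBlocks {w : Fin (2 * n) → Fin n} {i : Fin n} :
    i ∈ mixedBlocks w ↔ w (blockFst i) ≠ w (blockSnd i) :=
  mem_filter_univ i

lemma eq_of_Bword_eq_of_notMem_mixedBlocks {w : Fin (2 * n) → Fin n} {j k : Fin (2 * n)}
    (hj : Bword n j ∉ mixedBlocks w) (hkj : Bword n k = Bword n j) : w k = w j := by
  rw [mem_mixedBlocks, not_not] at hj
  have hj_pos := eq_blockFst_or_eq_blockSnd j
  have hk_pos := eq_blockFst_or_eq_blockSnd k
  grind

lemma filter_mixedBlocks_eq_empty :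
    {w ∈ rearrangements n | mixedBlocks w = ∅} =
      univ.image fun π : Equiv.Perm (Fin n) => π ∘ Bword n := by
  ext w
  simp only [mem_filter, mem_image, mem_univ, true_and]
  constructor
  · rintro ⟨hw, hmix⟩
    have heq : w = (w ∘ blockFst) ∘ Bword n := funext fun j =>
      eq_of_Bword_eq_of_notMem_mixedBlocks (by simp [hmix]) (Bword_blockFst _).symm
    rw [heq, comp_Bword_mem_rearrangements_iff] at hw
    exact ⟨Equiv.ofBijective _ hw, heq.symm⟩
  · rintro ⟨π, rfl⟩
    exact ⟨comp_Bword_mem_rearrangements_iff.2 π.bijective, by simp [mixedBlocks]⟩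

lemma Bword_eq_of_eq_of_notMem_mixedBlocks {w : Fin (2 * n) → Fin n} (hw : w ∈ rearrangements n)
    {j k : Fin (2 * n)} (hj : Bword n j ∉ mixedBlocks w) (hkj : w k = w j) :
    Bword n k = Bword n j := by
  have fiber_eq : univ.filter (Bword n · = Bword n j) = univ.filter (w · = w j) := by
    refine eq_of_subset_of_card_le
      (monotone_filter_right _ fun l _ => eq_of_Bword_eq_of_notMem_mixedBlocks hj) ?_
    rw [mem_rearrangements.1 hw, filter_Bword_eq, card_pair (blockFst_covBy_blockSnd _).ne]
  simpa [hkj] using Finset.ext_iff.1 fiber_eq k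

lemma exists_gt_eq_of_isLeast_mixedBlocks {w : Fin (2 * n) → Fin n} {i : Fin n}
    (hw : w ∈ rearrangements n) (hi : IsLeast (mixedBlocks w : Set (Fin n)) i)
    {p : Fin (2 * n)} (hp : Bword n p = i) : ∃ j, blockSnd i < j ∧ w j = w p := by
  have one_lt : 1 < #{j | w j = w p} := by rw [mem_rearrangements.1 hw]; exact one_lt_two
  obtain ⟨j, hj, hjp⟩ := exists_mem_ne one_lt p
  rw [mem_filter_univ] at hj
  refine ⟨j, Bword_monotone.reflect_lt ?_, hj⟩
  rw [Bword_blockSnd]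
  by_contra! hle
  rcases hle.lt_or_eq with hlt | heq
  · have unmixed : Bword n j ∉ mixedBlocks w := fun h => (hi.2 h).not_gt hlt
    have same_block := Bword_eq_of_eq_of_notMem_mixedBlocks hw unmixed hj.symm
    exact hlt.ne (same_block.symm.trans hp)
  · have mixed : w (blockFst i) ≠ w (blockSnd i) := mem_mixedBlocks.1 hi.1
    have p_pos := eq_blockFst_or_eq_blockSnd p
    have j_pos := eq_blockFst_or_eq_blockSnd j
    grind

end Rearrangement

section Cancellation

variable {n : ℕ}

/-- The transposition of the two positions at which `B_n` carries the letter `i`. -/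
def blockSwap (i : Fin n) : Equiv.Perm (Fin (2 * n)) :=
  Equiv.swap (blockFst i) (blockSnd i)

@[simp]
lemma Bword_blockSwap (i : Fin n) (j : Fin (2 * n)) : Bword n (blockSwap i j) = Bword n j := by
  grind [blockSwap, Bword_blockFst, Bword_blockSnd]

lemma blockSwap_apply_of_ne {i : Fin n} {j : Fin (2 * n)} (h : Bword n j ≠ i) :
    blockSwap i j = j := by
  grind [blockSwap, Bword_blockFst, Bword_blockSnd]

lemma mixedBlocks_comp_blockSwap (w : Fin (2 * n) → Fin n) (i : Fin n) :
    mixedBlocks (w ∘ blockSwap i) = mixedBlocks w := by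
  ext k
  simp only [mem_mixedBlocks, Function.comp_apply]
  rcases eq_or_ne k i with rfl | hki
  · simpa only [blockSwap, Equiv.swap_apply_left, Equiv.swap_apply_right] using ne_comm
  · rw [blockSwap_apply_of_ne (by simpa using hki), blockSwap_apply_of_ne (by simpa using hki)]

lemma prod_comp_blockSwap {M : Type*} [CommMonoid M] (g : Fin n → Fin n → M)
    (w : Fin (2 * n) → Fin n) (i : Fin n) :
    ∏ j, g (Bword n j) ((w ∘ blockSwap i) j) = ∏ j, g (Bword n j) (w j) :=
  Fintype.prod_equiv (blockSwap i) _ _ fun j => by simp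

lemma RLMvW_comp_blockSwap {w : Fin (2 * n) → Fin n} {i : Fin n} (hw : w ∈ rearrangements n)
    (hi : IsLeast (mixedBlocks w : Set (Fin n)) i) : RLMvW (w ∘ blockSwap i) = RLMvW w :=
  RLMvW_comp_swap (blockFst_covBy_blockSnd i)
    (exists_gt_eq_of_isLeast_mixedBlocks hw hi (Bword_blockFst i))
    (exists_gt_eq_of_isLeast_mixedBlocks hw hi (Bword_blockSnd i))

lemma sum_mixedBlocks_nonempty_eq_zero {R : Type*} [CommRing R] (g : Fin n → Fin n → R)
    (F : Finset (Fin n) → R) :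
    ∑ w ∈ rearrangements n with (mixedBlocks w).Nonempty,
      (-1) ^ invW w * (∏ j, g (Bword n j) (w j)) * F (RLMvW w) = 0 := by
  refine sum_involution
    (fun w hw => w ∘ blockSwap ((mixedBlocks w).min' (mem_filter.1 hw).2)) ?_ ?_ ?_ ?_
  all_goals
    intro w hw
    obtain ⟨hw, hmix⟩ := mem_filter.1 hw
    have hi := (mixedBlocks w).isLeast_min' hmix
    have mixed : w (blockFst _) ≠ w (blockSnd _) := mem_mixedBlocks.1 hi.1
  · have sign_neg := neg_one_pow_invW_comp_swap (R := R) (blockFst_covBy_blockSnd _) mixed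
    rw [prod_comp_blockSwap, RLMvW_comp_blockSwap hw hi, blockSwap, sign_neg]
    ring
  · intro _ heq
    exact mixed (by simpa [blockSwap] using congrFun heq (blockSnd ((mixedBlocks w).min' hmix)))
  · exact mem_filter.2 ⟨comp_perm_mem_rearrangements hw _, by rwa [mixedBlocks_comp_blockSwap]⟩
  · simp only [mixedBlocks_comp_blockSwap]
    exact comp_swap_comp_swap w _ _

end Cancellation

section Excedance

/-- The weight `x k` of an excedance `i < k` and `1` of a non-excedance `i > k`, with zero diagonal
so that only derangements have a nonzero product of weights. -/
def excWeight {α R : Type*} [LinearOrder α] [Zero R] [One R] (x : α → R) (i k : α) : R :=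
  if k = i then 0 else if i < k then x k else 1

lemma prod_excWeight {ι α R : Type*} [Fintype ι] [LinearOrder α] [CommMonoidWithZero R]
    (x : α → R) (u w : ι → α) :
    ∏ j, excWeight x (u j) (w j) =
      if ∀ j, w j ≠ u j then ∏ j with u j < w j, x (w j) else 0 := by
  split_ifs with h
  · simp [excWeight, h, prod_filter]
  · push Not at h
    obtain ⟨j, hj⟩ := h
    exact prod_eq_zero (mem_univ j) (if_pos hj)

variable {n : ℕ} {R : Type*} [CommSemiring R] (x : Fin n → R)

lemma sum_biderangements_eq_sum_rearrangements (c d : (Fin (2 * n) → Fin n) → R) :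
    ∑ w ∈ biderangements n, c w * (∏ j with Bword n j < w j, x (w j)) * d w =
      ∑ w ∈ rearrangements n, c w * (∏ j, excWeight x (Bword n j) (w j)) * d w := by
  simp only [prod_excWeight, mul_ite, ite_mul, mul_zero, zero_mul, ← sum_filter, rearrangements,
    filter_filter, biderangements]

lemma sum_derangementsF_eq_sum_perm (d : Equiv.Perm (Fin n) → R) :
    ∑ π ∈ derangementsF n, (∏ j ∈ EXCv π, x j ^ 2) * d π =
      ∑ π : Equiv.Perm (Fin n), (∏ i, excWeight x i (π i) ^ 2) * d π := by
  have prod_EXCv (π : Equiv.Perm (Fin n)) : ∏ j ∈ EXCv π, x j ^ 2 = ∏ i with i < π i, x (π i) ^ 2 :=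
    prod_image π.injective.injOn
  simp only [prod_EXCv, prod_pow, prod_excWeight, ite_pow, ite_mul, ne_eq, OfNat.ofNat_ne_zero,
    not_false_eq_true, zero_pow, zero_mul, ← sum_filter, derangementsF]

end Excedance

theorem stmt19_general {n : ℕ} {R : Type*} [CommRing R] (g : Fin n → Fin n → R)
    (F : Finset (Fin n) → R) :
    ∑ w ∈ rearrangements n, (-1) ^ invW w * (∏ j, g (Bword n j) (w j)) * F (RLMvW w) =
      ∑ π : Equiv.Perm (Fin n), (∏ i, g i (π i) ^ 2) * F (RLMv π) := by
  have inj : Function.Injective fun π : Equiv.Perm (Fin n) => π ∘ Bword n :=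
    Bword_surjective.injective_comp_right.comp DFunLike.coe_injective
  have sign_one (π : Equiv.Perm (Fin n)) : (-1 : R) ^ invW (π ∘ Bword n) = 1 := by
    rw [invW_comp_Bword, pow_mul, Even.neg_one_pow (by decide), one_pow]
  rw [← sum_filter_add_sum_filter_not _ fun w => (mixedBlocks w).Nonempty,
    sum_mixedBlocks_nonempty_eq_zero, zero_add]
  simp_rw [not_nonempty_iff_eq_empty, filter_mixedBlocks_eq_empty]
  rw [sum_image inj.injOn]
  refine sum_congr rfl fun π _ => ?_
  rw [sign_one, RLMvW_comp_Bword, one_mul, ← prod_comp_Bword fun i => g i (π i)]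
  rfl

/-- `X (Sum.inl v)` is `x_{v+1}` and `X (Sum.inr v)` is `y_{v+1}`.  The product
over the multiset `EXCv(w)` (with multiplicity) is realised as the product of
`x_{w j}` over the excedance positions `j`, and the product over the multiset
`EXCv²(π)` as the product of `x_j²` over the excedance values `j` of `π`. -/
theorem stmt19 (n : ℕ) (hn : 1 ≤ n) :
    ∑ w ∈ biderangements n,
      ((-1 : MvPolynomial (Fin n ⊕ Fin n) ℤ) ^ invW w)
        * (∏ j ∈ Finset.univ.filter (fun j : Fin (2 * n) => Bword n j < w j),
            X (Sum.inl (w j)))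
        * (∏ v ∈ RLMvW w, X (Sum.inr v))
    = ∑ π ∈ derangementsF n,
        (∏ j ∈ EXCv π, (X (Sum.inl j) : MvPolynomial (Fin n ⊕ Fin n) ℤ) ^ 2)
          * (∏ v ∈ RLMv π, X (Sum.inr v)) := by
  rw [sum_biderangements_eq_sum_rearrangements fun v => X (Sum.inl v),
    sum_derangementsF_eq_sum_perm fun v => X (Sum.inl v),
    stmt19_general _ fun s => ∏ v ∈ s, X (Sum.inr v)]
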